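/- arXiv:2208.06769 — 2 statements merged into one kernel-verified Lean document; each statement's English description precedes it below -/
import Mathlib

section
/- Let γ > 1 and ρ₀ > 0. For ρ₁ > ρ₀ define v₁(ρ₁) = (ρ₁ − ρ₀)√(2(ρ₁^{γ−1} − ρ₀^{γ−1})/(ρ₁² − ρ₀²)) and the sonic speed of state (1) by c₁(ρ₁) = ρ₁^{(γ−1)/2}. Then there exists ρ^c > ρ₀ such that for all ρ₁ > ρ₀: v₁(ρ₁) ≤ c₁(ρ₁) if ρ₁ ∈ (ρ₀, ρ^c], and v₁(ρ₁) > c₁(ρ₁) if ρ₁ ∈ (ρ^c, ∞). -/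
/-- The squared Mach number. -/
noncomputable def machSq (p r x : ℝ) : ℝ := 2 * ((x - r) / (x + r)) * (1 - (r / x) ^ p)

lemma machSq_strictMono (p r : ℝ) (hp : 0 < p) (hr : 0 < r) :
    ∀ x y : ℝ, r ≤ x → x < y → machSq p r x < machSq p r y := by
  intro x y hx hxy
  have hx0 : 0 < x := by linarith
  have hy0 : 0 < y := by linarith
  unfold machSq
  have h1 : (x - r) / (x + r) < (y - r) / (y + r) := by
    rw [div_lt_div_iff₀ (by linarith) (by linarith)]
    nlinarith
  have h2 : (r / y) ^ p < (r / x) ^ p := by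
    apply Real.rpow_lt_rpow (by positivity) _ hp
    exact div_lt_div_of_pos_left hr hx0 hxy
  have h3 : (r / x) ^ p ≤ 1 :=
    Real.rpow_le_one (by positivity) ((div_le_one hx0).2 hx) hp.le
  have h4 : 0 ≤ (x - r) / (x + r) := div_nonneg (by linarith) (by linarith)
  nlinarith [mul_pos (sub_pos.2 h1) (sub_pos.2 (lt_of_lt_of_le h2 h3)),
    mul_nonneg h4 (sub_pos.2 h2).le]

lemma machSq_exists (p r : ℝ) (hp : 0 < p) (hr : 0 < r) :
    ∃ c, r < c ∧ machSq p r c = 1 := by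
  obtain ⟨t, ht7, ht3⟩ : ∃ t : ℝ, 7 ≤ t ∧ 3 ≤ t ^ p := by
    refine ⟨max 7 (3 ^ (1 / p)), le_max_left _ _, ?_⟩
    calc (3 : ℝ) = ((3 : ℝ) ^ (1 / p)) ^ p := by
          rw [← Real.rpow_mul (by norm_num), one_div_mul_cancel hp.ne', Real.rpow_one]
      _ ≤ _ := Real.rpow_le_rpow (by positivity) (le_max_right _ _) hp.le
  have hle : r ≤ r * t := by nlinarith
  have hcont : ContinuousOn (machSq p r) (Set.Icc r (r * t)) := by
    intro x hx
    have hx0 : 0 < x := lt_of_lt_of_le hr hx.1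
    apply ContinuousAt.continuousWithinAt
    unfold machSq
    refine ContinuousAt.mul (continuousAt_const.mul (ContinuousAt.div (by fun_prop) (by fun_prop)
      (by linarith))) (continuousAt_const.sub (ContinuousAt.rpow_const
        (ContinuousAt.div (by fun_prop) (by fun_prop) hx0.ne') (Or.inr hp.le)))
  have h0 : machSq p r r = 0 := by simp [machSq]
  have h1 : 1 ≤ machSq p r (r * t) := by
    unfold machSq
    have e1 : 3 / 4 ≤ (r * t - r) / (r * t + r) := by
      rw [div_le_div_iff₀ (by norm_num) (by nlinarith)]
      nlinarith
    have e2 : (r / (r * t)) ^ p ≤ 1 / 3 := by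
      have : r / (r * t) = t⁻¹ := by field_simp
      rw [this, Real.inv_rpow (by linarith), one_div]
      exact inv_anti₀ (by norm_num) ht3
    nlinarith
  obtain ⟨c, hc, hc1⟩ := intermediate_value_Icc hle hcont
    (show (1 : ℝ) ∈ Set.Icc _ _ from ⟨by rw [h0]; norm_num, h1⟩)
  refine ⟨c, lt_of_le_of_ne hc.1 ?_, hc1⟩
  rintro rfl
  rw [h0] at hc1
  norm_num at hc1

lemma v_sq (p r x : ℝ) (hp : 0 < p) (hr : 0 < r) (hx : r < x) :
    ((x - r) * Real.sqrt (2 * (x ^ p - r ^ p) / (x ^ 2 - r ^ 2))) ^ 2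
      = machSq p r x * (x ^ (p / 2)) ^ 2 := by
  have hx0 : 0 < x := by linarith
  have hA : r ^ p < x ^ p := Real.rpow_lt_rpow hr.le hx hp
  have hd : 0 < x ^ 2 - r ^ 2 := by nlinarith
  have hc : (x ^ (p / 2)) ^ 2 = x ^ p := by
    rw [← Real.rpow_natCast, ← Real.rpow_mul hx0.le]
    norm_num
  have hxp : 0 < x ^ p := Real.rpow_pos_of_pos hx0 p
  rw [mul_pow, Real.sq_sqrt (div_nonneg (by linarith) hd.le), hc, machSq,
    Real.div_rpow hr.le hx0.le]
  have h1 : x - r ≠ 0 := by linarith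
  have h2 : x + r ≠ 0 := by linarith
  have : x ^ 2 - r ^ 2 = (x - r) * (x + r) := by ring
  rw [this]
  field_simp

/-- For `γ > 1`, `ρ₀ > 0`, with
`v₁(ρ₁) = (ρ₁ − ρ₀)√(2(ρ₁^{γ−1} − ρ₀^{γ−1})/(ρ₁² − ρ₀²))` and `c₁(ρ₁) = ρ₁^{(γ−1)/2}`,
there exists `ρᶜ > ρ₀` with `v₁(ρ₁) ≤ c₁(ρ₁)` for `ρ₁ ∈ (ρ₀, ρᶜ]` and `v₁(ρ₁) > c₁(ρ₁)`
for `ρ₁ ∈ (ρᶜ, ∞)`. -/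
theorem statement12 (γ ρ₀ : ℝ) (hγ : 1 < γ) (hρ₀ : 0 < ρ₀) :
    ∃ ρc : ℝ, ρ₀ < ρc ∧ ∀ ρ₁ : ℝ, ρ₀ < ρ₁ →
      ((ρ₁ ≤ ρc →
        (ρ₁ - ρ₀) * Real.sqrt (2 * (ρ₁ ^ (γ - 1) - ρ₀ ^ (γ - 1)) / (ρ₁ ^ 2 - ρ₀ ^ 2))
          ≤ ρ₁ ^ ((γ - 1) / 2)) ∧
       (ρc < ρ₁ →
        ρ₁ ^ ((γ - 1) / 2)
          < (ρ₁ - ρ₀) * Real.sqrt (2 * (ρ₁ ^ (γ - 1) - ρ₀ ^ (γ - 1)) / (ρ₁ ^ 2 - ρ₀ ^ 2)))) := by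
  have hp : 0 < γ - 1 := by linarith
  obtain ⟨c, hc, hc1⟩ := machSq_exists (γ - 1) ρ₀ hp hρ₀
  refine ⟨c, hc, fun x hx => ?_⟩
  have hv := v_sq (γ - 1) ρ₀ x hp hρ₀ hx
  have hs : 0 < x ^ ((γ - 1) / 2) := Real.rpow_pos_of_pos (by linarith) _
  have hn : 0 ≤ (x - ρ₀) * Real.sqrt (2 * (x ^ (γ - 1) - ρ₀ ^ (γ - 1)) / (x ^ 2 - ρ₀ ^ 2)) :=
    mul_nonneg (by linarith) (Real.sqrt_nonneg _)
  constructor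
  · intro h
    refine (pow_le_pow_iff_left₀ hn hs.le two_ne_zero).1 ?_
    rw [hv]
    have : machSq (γ - 1) ρ₀ x ≤ 1 := by
      rcases h.eq_or_lt with rfl | h
      · exact hc1.le
      · exact (machSq_strictMono _ _ hp hρ₀ x c hx.le h).le.trans hc1.le
    nlinarith [sq_nonneg (x ^ ((γ - 1) / 2))]
  · intro h
    apply lt_of_pow_lt_pow_left₀ 2 hn
    rw [hv]
    have := machSq_strictMono _ _ hp hρ₀ c x hc.le h
    rw [hc1] at this
    nlinarith [pow_pos hs 2]
end

section
/- Let γ > 1, 0 < ρ₀ < ρ₁, and v₁ > 0 satisfy the Bernoulli compatibility ρ₁^{γ−1} = ρ₀^{γ−1} − (γ−1)(½v₁² − v₁ξ₁⁰), where ξ₁⁰ = ρ₁v₁/(ρ₁ − ρ₀). Then there exists a unique pair (ξ̄₁, ρ₂) with ξ̄₁ < 0 and ρ₂ > ρ₁ such that the normal reflection configuration holds: (i) ρ₂^{γ−1} = ρ₀^{γ−1} − (γ−1)v₁(ξ̄₁ − ξ₁⁰) (Bernoulli relation for the rest state (2) with pseudo-potential φ₂(ξ) = −½|ξ|² + v₁(ξ̄₁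 − ξ₁⁰), which agrees with φ₁ on {ξ₁ = ξ̄₁}); and (ii) the Rankine–Hugoniot mass-flux condition ρ₁(v₁ − ξ̄₁) = ρ₂(−ξ̄₁) across the flat reflected shock {ξ₁ = ξ̄₁}. -/
/-- Normal reflection: given `γ > 1`, `0 < ρ₀ < ρ₁`, `v₁ > 0` with the
Bernoulli compatibility `ρ₁^{γ−1} = ρ₀^{γ−1} − (γ−1)(½v₁² − v₁ξ₁⁰)`, `ξ₁⁰ = ρ₁v₁/(ρ₁−ρ₀)`,
there is a unique pair `(ξ̄₁, ρ₂)` with `ξ̄₁ < 0`, `ρ₂ > ρ₁`, the Bernoulli relation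
`ρ₂^{γ−1} = ρ₀^{γ−1} − (γ−1)v₁(ξ̄₁ − ξ₁⁰)`, and the Rankine–Hugoniot mass-flux condition
`ρ₁(v₁ − ξ̄₁) = ρ₂(−ξ̄₁)` across the flat reflected shock `{ξ₁ = ξ̄₁}`. -/
theorem statement13 (γ ρ₀ ρ₁ v₁ : ℝ) (hγ : 1 < γ) (h0 : 0 < ρ₀) (h01 : ρ₀ < ρ₁)
    (hv : 0 < v₁)
    (hBern : ρ₁ ^ (γ - 1)
      = ρ₀ ^ (γ - 1) - (γ - 1) * ((1 / 2) * v₁ ^ 2 - v₁ * (ρ₁ * v₁ / (ρ₁ - ρ₀)))) :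
    ∃! p : ℝ × ℝ, p.1 < 0 ∧ ρ₁ < p.2 ∧
      p.2 ^ (γ - 1) = ρ₀ ^ (γ - 1) - (γ - 1) * v₁ * (p.1 - ρ₁ * v₁ / (ρ₁ - ρ₀)) ∧
      ρ₁ * (v₁ - p.1) = p.2 * (-p.1) := by
  obtain ⟨a, ha⟩ : ∃ a, a = γ - 1 := ⟨_, rfl⟩
  obtain ⟨K, hK⟩ : ∃ K, K = ρ₁ * v₁ / (ρ₁ - ρ₀) := ⟨_, rfl⟩
  simp only [← ha, ← hK] at hBern ⊢
  have ha0 : 0 < a := by linarith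
  have h1 : 0 < ρ₁ := h0.trans h01
  have hav : 0 < a * v₁ := mul_pos ha0 hv
  obtain ⟨A, hA⟩ : ∃ A, A = ρ₁ ^ a + a * (v₁ ^ 2 / 2) := ⟨_, rfl⟩
  have key : ∀ x : ℝ, ρ₀ ^ a - a * v₁ * (x - K) = A - a * v₁ * x := by
    intro x
    rw [hA, hBern]; ring
  have uniq : ∀ x r y q : ℝ, x < 0 → ρ₁ < r → ρ₁ < q → r ^ a = A - a * v₁ * x →
      q ^ a = A - a * v₁ * y → ρ₁ * (v₁ - x) = r * (-x) → ρ₁ * (v₁ - y) = q * (-y) →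
      ¬ r < q := by
    intro x r y q hx hr hq e1 e2 e3 e4 hlt
    have h := Real.rpow_lt_rpow (h1.trans hr).le hlt ha0
    have hxy : y < x := by
      have : a * v₁ * y < a * v₁ * x := by linarith
      exact lt_of_mul_lt_mul_left this hav.le
    nlinarith [mul_pos (sub_pos.2 hxy) (sub_pos.2 hq), mul_pos (neg_pos.2 hx) (sub_pos.2 hlt)]
  have exi : ∃ r, ρ₁ < r ∧ (r - ρ₁) * (r ^ a - A) = a * v₁ ^ 2 * ρ₁ := by
    obtain ⟨M, hM1, hM2⟩ := (((tendsto_rpow_atTop ha0).eventually_ge_atTop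
      (A + a * v₁ ^ 2 * ρ₁)).and (Filter.eventually_ge_atTop (ρ₁ + 1))).exists
    have hc : 0 < a * v₁ ^ 2 * ρ₁ := by positivity
    have hcont : ContinuousOn (fun r : ℝ => (r - ρ₁) * (r ^ a - A)) (Set.Icc ρ₁ M) := by
      apply Continuous.continuousOn
      have := Real.continuous_rpow_const ha0.le
      fun_prop
    have hmem : a * v₁ ^ 2 * ρ₁ ∈ Set.Icc ((ρ₁ - ρ₁) * (ρ₁ ^ a - A)) ((M - ρ₁) * (M ^ a - A)) := by
      constructor
      · simp only [sub_self, zero_mul]; exact hc.le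
      · nlinarith
    obtain ⟨r, hr, hre⟩ := intermediate_value_Icc (by linarith) hcont hmem
    refine ⟨r, lt_of_le_of_ne hr.1 ?_, hre⟩
    rintro rfl
    simp only [sub_self, zero_mul] at hre
    linarith
  obtain ⟨r, hr, hre⟩ := exi
  have hd : 0 < r - ρ₁ := sub_pos.2 hr
  have hx : -(ρ₁ * v₁ / (r - ρ₁)) < 0 := neg_neg_of_pos (by positivity)
  have e1 : r ^ a = A - a * v₁ * (-(ρ₁ * v₁ / (r - ρ₁))) := by
    field_simp
    linarith
  have e2 : ρ₁ * (v₁ - -(ρ₁ * v₁ / (r - ρ₁))) = r * (- -(ρ₁ * v₁ / (r - ρ₁))) := by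
    field_simp
    ring
  refine ⟨(-(ρ₁ * v₁ / (r - ρ₁)), r), ⟨hx, hr, ?_, e2⟩, ?_⟩
  · simp only [key]; exact e1
  · rintro ⟨y, q⟩ ⟨hy, hq, f1, f2⟩
    simp only [key] at hy hq f1 f2
    have hqr : q = r := le_antisymm (not_lt.1 (uniq _ _ _ _ hx hr hq e1 f1 e2 f2))
      (not_lt.1 (uniq _ _ _ _ hy hq hr f1 e1 f2 e2))
    subst hqr
    have : y = -(ρ₁ * v₁ / (q - ρ₁)) := mul_left_cancel₀ hav.ne' (by linarith)
    rw [this]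
end
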